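/- Let π, r ∈ ℤ[ω] with π a prime, π ≡ r ≡ 1 (mod 3), gcd(π,r)=1, and let j ≥ 0 with k = j+1. Then g(rπ^j, π^{j+1}) equals N(π^j) times: −1 if 3 | k; g(r,π) if k ≡ 1 (mod 3); and conj(g(r,π)) if k ≡ 2 (mod 3). -/

import Mathlib

open Complex

noncomputable section

/-- The primitive cube root of unity `ω = e^{2πi/3}`. -/
def ω : ℂ := Complex.exp (2 * Real.pi * Complex.I / 3)

/-- The ring of Eisenstein integers `ℤ[ω]`, as a subring of `ℂ`. -/
def Zω : Subring ℂ := Subring.closure {ω}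

/-- `ω` as an element of `ℤ[ω]`. -/
def ωZ : Zω := ⟨ω, Subring.subset_closure rfl⟩

/-- The ramified prime `λ = 1 - ω` of `ℤ[ω]`. -/
def lamZ : Zω := 1 - ωZ

/-- The norm `N(a) = |a|²` from `ℚ(ω)` to `ℚ`, restricted to `ℤ[ω]`. -/
def Nm (a : Zω) : ℝ := Complex.normSq (a : ℂ)

/-- The norm of an Eisenstein integer, as a natural number. -/
def NmNat (a : Zω) : ℕ := ⌊Complex.normSq (a : ℂ)⌋₊

/-- `e(z) = e^{2πi Tr(z)} = e^{2πi (z + z̄)}`. -/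
def eE (z : ℂ) : ℂ := Complex.exp (2 * Real.pi * Complex.I * (z + (starRingEnd ℂ) z))

/-- `χ` is the cubic residue symbol `χ a b = (a/b)₃` on `ℤ[ω]`:
it is multiplicative in both arguments, and at prime moduli `π` coprime to `3`
it is given by the power-residue congruence
`(a/π)₃ ≡ a^{(N(π)-1)/3} (mod π)`, with values among `{1, ω, ω²}` (and `0` when `π ∣ a`). -/
def IsCubicSymbol (χ : Zω → Zω → Zω) : Prop :=
  (∀ a b₁ b₂ : Zω, χ a (b₁ * b₂) = χ a b₁ * χ a b₂) ∧
  (∀ a₁ a₂ b : Zω, χ (a₁ * a₂) b = χ a₁ b * χ a₂ b) ∧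
  (∀ a : Zω, χ a 1 = 1) ∧
  (∀ a π : Zω, Prime π → IsCoprime π 3 →
    (π ∣ a → χ a π = 0) ∧
    (¬ π ∣ a →
      ((χ a π : ℂ) = 1 ∨ (χ a π : ℂ) = ω ∨ (χ a π : ℂ) = ω ^ 2) ∧
      π ∣ (a ^ ((NmNat π - 1) / 3) - χ a π)))

/-- The shifted cubic Gauss sum `g(ν,c) = Σ_{d mod c} (d/c)₃ e(νd/c)`,
relative to a cubic residue symbol `χ`. -/
def gauss (χ : Zω → Zω → Zω) (ν c : Zω) : ℂ :=
  ∑' q : Zω ⧸ Ideal.span {c},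
    ((χ (Quotient.out q) c : Zω) : ℂ) * eE (((ν * Quotient.out q : Zω) : ℂ) / (c : ℂ))

/-- `μ` is the Möbius function of `ℤ[ω]`. -/
def IsMoebiusZω (μ : Zω → ℤ) : Prop :=
  μ 1 = 1 ∧
  (∀ a : Zω, ¬ Squarefree a → μ a = 0) ∧
  (∀ a b : Zω, IsCoprime a b → μ (a * b) = μ a * μ b) ∧
  (∀ π : Zω, Prime π → μ π = -1)

end

lemma om_cube : ω ^ 3 = 1 := by
  unfold ω
  rw [← Complex.exp_nat_mul, ← Complex.exp_two_pi_mul_I]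
  congr 1
  push_cast
  ring

lemma om_im : ω.im = Real.sqrt 3 / 2 := by
  have h : (2 * Real.pi * Complex.I / 3 : ℂ) = ((2 * Real.pi / 3 : ℝ) : ℂ) * Complex.I := by
    push_cast; ring
  unfold ω
  rw [h, Complex.exp_ofReal_mul_I_im]
  rw [show 2 * Real.pi / 3 = Real.pi - Real.pi / 3 by ring, Real.sin_pi_sub, Real.sin_pi_div_three]

lemma om_im_ne : ω.im ≠ 0 := by
  rw [om_im]; positivity

lemma om_sq : ω ^ 2 = -1 - ω := by
  have h1 : ω - 1 ≠ 0 := by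
    intro h
    have := congrArg Complex.im h
    simp at this
    exact om_im_ne this
  have h2 : (ω - 1) * (ω ^ 2 + ω + 1) = 0 := by
    linear_combination om_cube
  have := (mul_eq_zero.mp h2).resolve_left h1
  linear_combination this

lemma conj_of_cube {u : ℂ} (hu : u ^ 3 = 1) : (starRingEnd ℂ) u = u ^ 2 := by
  have hn : ‖u‖ = 1 := by
    have : ‖u‖ ^ 3 = 1 := by rw [← norm_pow, hu, norm_one]
    exact (pow_eq_one_iff_of_nonneg (norm_nonneg _) (by norm_num)).mp this
  have h0 : u ≠ 0 := by
    intro h; simp [h] at hn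
  have h1 : u * (starRingEnd ℂ) u = 1 := by
    rw [Complex.mul_conj, Complex.normSq_eq_norm_sq, hn]; norm_num
  apply mul_left_cancel₀ h0
  rw [h1, ← hu]; ring

lemma conj_om : (starRingEnd ℂ) ω = -1 - ω := by
  rw [conj_of_cube om_cube, om_sq]

lemma Zom_rep (a : Zω) : ∃ x y : ℤ, (a : ℂ) = x + y * ω := by
  obtain ⟨a, ha⟩ := a
  change ∃ x y : ℤ, a = x + y * ω
  unfold Zω at ha
  induction ha using Subring.closure_induction with
  | mem x hx => exact ⟨0, 1, by simpa using hx⟩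
  | zero => exact ⟨0, 0, by simp⟩
  | one => exact ⟨1, 0, by simp⟩
  | add a b _ _ h1 h2 =>
    obtain ⟨x, y, rfl⟩ := h1
    obtain ⟨z, w, rfl⟩ := h2
    exact ⟨x + z, y + w, by push_cast; ring⟩
  | neg a _ h1 =>
    obtain ⟨x, y, rfl⟩ := h1
    exact ⟨-x, -y, by push_cast; ring⟩
  | mul a b _ _ h1 h2 =>
    obtain ⟨x, y, rfl⟩ := h1
    obtain ⟨z, w, rfl⟩ := h2
    refine ⟨x * z - y * w, x * w + y * z - y * w, ?_⟩
    push_cast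
    linear_combination (y * w : ℂ) * om_sq

lemma om_indep {x y : ℤ} (h : (x : ℂ) + y * ω = 0) : x = 0 ∧ y = 0 := by
  have h1 := congrArg Complex.im h
  simp at h1
  have hy : y = 0 := h1.resolve_right om_im_ne
  subst hy
  simp at h
  exact ⟨h, rfl⟩

lemma om_li : LinearIndependent ℤ ![(1 : Zω), ωZ] := by
  rw [LinearIndependent.pair_iff]
  intro s t h
  apply om_indep
  have := congrArg (fun z : Zω => (z : ℂ)) h
  simpa [ωZ] using this

lemma om_span : ⊤ ≤ Submodule.span ℤ (Set.range ![(1 : Zω), ωZ]) := by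
  intro a _
  obtain ⟨x, y, h⟩ := Zom_rep a
  have : a = x • (1 : Zω) + y • ωZ := by
    apply Subtype.ext
    simpa [ωZ] using h
  rw [this]
  refine add_mem (Submodule.smul_mem _ _ (Submodule.subset_span ⟨0, rfl⟩))
    (Submodule.smul_mem _ _ (Submodule.subset_span ⟨1, rfl⟩))

noncomputable def omBasis : Module.Basis (Fin 2) ℤ Zω := Module.Basis.mk om_li om_span

lemma omBasis_zero : omBasis 0 = 1 := by simp [omBasis]
lemma omBasis_one : omBasis 1 = ωZ := by simp [omBasis]

lemma omBasis_repr (a : Zω) (x y : ℤ) (h : (a : ℂ) = x + y * ω) :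
    omBasis.repr a 0 = x ∧ omBasis.repr a 1 = y := by
  have : a = x • omBasis 0 + y • omBasis 1 := by
    rw [omBasis_zero, omBasis_one]
    apply Subtype.ext
    simpa [ωZ] using h
  rw [this, map_add, map_smul, map_smul, Module.Basis.repr_self, Module.Basis.repr_self]
  simp

lemma Nm_rep (c : Zω) (x y : ℤ) (h : (c : ℂ) = x + y * ω) :
    Nm c = ((x * x - x * y + y * y : ℤ) : ℝ) := by
  have : ((Nm c : ℝ) : ℂ) = ((x * x - x * y + y * y : ℤ) : ℂ) := by
    unfold Nm
    rw [← Complex.mul_conj, h]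
    simp only [map_add, map_mul, conj_om, map_intCast]
    push_cast
    linear_combination (-(y * y : ℂ)) * om_sq
  exact_mod_cast this

lemma card_quot (c : Zω) (hc : c ≠ 0) : (Nat.card (Zω ⧸ Ideal.span {c}) : ℝ) = Nm c := by
  obtain ⟨x, y, h⟩ := Zom_rep c
  have : Module.Free ℤ Zω := Module.Free.of_basis omBasis
  have : Module.Finite ℤ Zω := Module.Finite.of_basis omBasis
  have hd := Submodule.natAbs_det_basis_change omBasis ((Ideal.span {c}).restrictScalars ℤ)
    (Ideal.basisSpanSingleton omBasis hc)
  have hq : Nat.card (Zω ⧸ ((Ideal.span {c}).restrictScalars ℤ)) =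
    Nat.card (Zω ⧸ Ideal.span {c}) := rfl
  rw [hq] at hd
  rw [← hd, Nm_rep c x y h, Module.Basis.det_apply, Matrix.det_fin_two]
  have e0 := omBasis_repr (c * omBasis 0) x y (by simpa [omBasis_zero] using h)
  have e1 := omBasis_repr (c * omBasis 1) (-y) (x - y) (by
    rw [omBasis_one]
    simp only [Subring.coe_mul, h, ωZ]
    push_cast
    linear_combination (y : ℂ) * om_sq)
  have f0 : ((Ideal.basisSpanSingleton omBasis hc) 0 : Zω) = c * omBasis 0 := by simp
  have f1 : ((Ideal.basisSpanSingleton omBasis hc) 1 : Zω) = c * omBasis 1 := by simp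
  simp only [Module.Basis.toMatrix_apply, Function.comp]
  erw [f0, f1]
  rw [e0.1, e0.2, e1.1, e1.2]
  rw [show x * (x - y) - -y * y = x * x - x * y + y * y by ring]
  rw [Nat.cast_natAbs, abs_of_nonneg]
  nlinarith [sq_nonneg (x - y), sq_nonneg (x), sq_nonneg y, sq_nonneg (x+y)]

lemma Nm_ne (c : Zω) (hc : c ≠ 0) : Nm c ≠ 0 := by
  unfold Nm
  rw [Ne, Complex.normSq_eq_zero]
  simpa using hc

lemma finite_quot (c : Zω) (hc : c ≠ 0) : Finite (Zω ⧸ Ideal.span {c}) := by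
  apply Nat.finite_of_card_ne_zero
  intro h
  apply Nm_ne c hc
  rw [← card_quot c hc, h]; simp

lemma Nm_mul (a b : Zω) : Nm (a * b) = Nm a * Nm b := by
  unfold Nm; simp

lemma eE_add (a b : ℂ) : eE (a + b) = eE a * eE b := by
  unfold eE
  rw [← Complex.exp_add, map_add]; congr 1; ring

lemma eE_zero : eE 0 = 1 := by simp [eE]

lemma eE_int (a : Zω) : eE a = 1 := by
  obtain ⟨x, y, h⟩ := Zom_rep a
  unfold eE
  rw [Complex.exp_eq_one_iff]
  refine ⟨2 * x - y, ?_⟩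
  rw [h]
  simp only [map_add, map_mul, conj_om, map_intCast]
  push_cast; ring

lemma eE_conj (z : ℂ) : (starRingEnd ℂ) (eE z) = eE (-z) := by
  unfold eE
  rw [← Complex.exp_conj]
  congr 1
  simp only [map_mul, map_add, Complex.conj_I, Complex.conj_ofReal, Complex.conj_conj, map_neg,
    map_ofNat]
  ring

lemma eE_one_iff {z : ℂ} (h : eE z = 1) : ∃ n : ℤ, z + (starRingEnd ℂ) z = n := by
  unfold eE at h
  rw [Complex.exp_eq_one_iff] at h
  obtain ⟨n, hn⟩ := h
  refine ⟨n, ?_⟩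
  apply mul_left_cancel₀ Complex.two_pi_I_ne_zero
  rw [hn]; ring

lemma eE_nontriv {z : ℂ} (h1 : eE z = 1) (h2 : eE (z * ω) = 1) :
    ∃ s : Zω, z * (1 + 2 * ω) = s := by
  obtain ⟨m, hm⟩ := eE_one_iff h1
  obtain ⟨n, hn⟩ := eE_one_iff h2
  refine ⟨(m : Zω) + n + m * ωZ, ?_⟩
  simp only [map_mul, conj_om] at hn
  push_cast
  simp only [ωZ]
  rw [← hm, ← hn]
  ring

section main

variable {χ : Zω → Zω → Zω} {π r : Zω}

lemma cop3 (hπ1 : (3 : Zω) ∣ (π - 1)) : IsCoprime π 3 := by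
  obtain ⟨t, ht⟩ := hπ1
  exact ⟨1, -t, by linear_combination ht⟩

lemma not_dvd_three (hπ : Prime π) (hπ1 : (3 : Zω) ∣ (π - 1)) : ¬ π ∣ 3 := by
  intro h
  exact hπ.not_isUnit ((cop3 hπ1).isUnit_of_dvd' dvd_rfl h)

lemma chi_cube (hχ : IsCubicSymbol χ) (hπ : Prime π) (hπ1 : (3 : Zω) ∣ (π - 1)) {a : Zω}
    (ha : ¬ π ∣ a) : (χ a π) ^ 3 = 1 := by
  apply Subtype.ext
  push_cast
  rcases ((hχ.2.2.2 a π hπ (cop3 hπ1)).2 ha).1 with h | h | h <;> rw [h]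
  · norm_num
  · exact om_cube
  · rw [← pow_mul, mul_comm, pow_mul, om_cube, one_pow]

lemma chi_congr (hχ : IsCubicSymbol χ) (hπ : Prime π) (hπ1 : (3 : Zω) ∣ (π - 1)) {a b : Zω}
    (hab : π ∣ a - b) : χ a π = χ b π := by
  by_cases ha : π ∣ a
  · have hb : π ∣ b := (dvd_iff_dvd_of_dvd_sub hab).mp ha
    rw [(hχ.2.2.2 a π hπ (cop3 hπ1)).1 ha, (hχ.2.2.2 b π hπ (cop3 hπ1)).1 hb]
  · have hb : ¬ π ∣ b := fun h => ha ((dvd_iff_dvd_of_dvd_sub hab).mpr h)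
    have ha3 := chi_cube hχ hπ hπ1 ha
    have hb3 := chi_cube hχ hπ hπ1 hb
    have h1 := ((hχ.2.2.2 a π hπ (cop3 hπ1)).2 ha).2
    have h2 := ((hχ.2.2.2 b π hπ (cop3 hπ1)).2 hb).2
    have h3 : π ∣ a ^ ((NmNat π - 1) / 3) - b ^ ((NmNat π - 1) / 3) :=
      hab.trans (sub_dvd_pow_sub_pow _ _ _)
    have h4 : π ∣ χ a π - χ b π := by
      have := (h3.sub h1).add h2
      convert this using 1; ring
    generalize χ a π = u at *
    generalize χ b π = v at *
    by_contra hne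
    have h5 : (u - v) * (u ^ 2 + u * v + v ^ 2) = 0 := by linear_combination ha3 - hb3
    have h6 := (mul_eq_zero.mp h5).resolve_left (sub_ne_zero.mpr hne)
    apply not_dvd_three hπ hπ1
    have h7 : (3 : Zω) = (u - v) * (-(u - v) * (u ^ 2 * v ^ 2)) := by
      linear_combination (u ^ 2 * v ^ 2) * h6 - 3 * v ^ 3 * ha3 - 3 * hb3
    rw [h7]
    exact h4.mul_right _

lemma chi_pow (hχ : IsCubicSymbol χ) (a : Zω) (n : ℕ) : χ a (π ^ n) = χ a π ^ n := by
  induction n with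
  | zero => simp [hχ.2.2.1]
  | succ n ih => rw [pow_succ, hχ.1, ih, pow_succ]

/-- the summand -/
noncomputable def FF (χ : Zω → Zω → Zω) (π r : Zω) (k : ℕ) (d : Zω) : ℂ :=
  (χ d π : ℂ) ^ k * eE ((r * d : ℂ) / π)

lemma eE_congr (hπ : Prime π) {a b : Zω} (hab : π ∣ a - b) :
    eE ((r * a : ℂ) / π) = eE ((r * b : ℂ) / π) := by
  obtain ⟨t, ht⟩ := hab
  have h0 : (π : ℂ) ≠ 0 := by simpa using hπ.ne_zero
  have ha : a = b + π * t := by linear_combination ht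
  have : (r * a : ℂ) / π = (r * b : ℂ) / π + ((r * t : Zω) : ℂ) := by
    rw [ha]; push_cast; field_simp
  rw [this, eE_add, eE_int, mul_one]

lemma FF_congr (hχ : IsCubicSymbol χ) (hπ : Prime π) (hπ1 : (3 : Zω) ∣ (π - 1)) (k : ℕ) {a b : Zω}
    (hab : π ∣ a - b) : FF χ π r k a = FF χ π r k b := by
  unfold FF
  rw [chi_congr hχ hπ hπ1 hab, eE_congr hπ hab]

lemma out_congr (c a : Zω) :
    c ∣ Quotient.out (Ideal.Quotient.mk (Ideal.span {c}) a) - a := by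
  rw [← Ideal.mem_span_singleton, ← Ideal.Quotient.eq]
  exact Quotient.out_eq _

lemma gauss_eq (hχ : IsCubicSymbol χ) (hπ : Prime π) (j : ℕ) :
    gauss χ (r * π ^ j) (π ^ (j + 1)) =
      ∑' q : Zω ⧸ Ideal.span {π ^ (j + 1)}, FF χ π r (j + 1) (Quotient.out q) := by
  unfold gauss FF
  have h0 : (π : ℂ) ≠ 0 := by simpa using hπ.ne_zero
  refine tsum_congr fun q => ?_
  rw [chi_pow hχ]
  push_cast
  congr 2
  field_simp
  ring

lemma sum_fiber {A B : Type*} [AddCommGroup A] [AddCommGroup B] [Finite A] [Finite B]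
    (f : A →+ B) (hf : Function.Surjective f) (G : B → ℂ) :
    (Nat.card B : ℂ) * ∑' a, G (f a) = Nat.card A * ∑' b, G b := by
  classical
  letI := Fintype.ofFinite A
  letI := Fintype.ofFinite B
  rw [tsum_fintype, tsum_fintype]
  have h1 : ∀ b : B, (Finset.univ.filter fun a => f a = b).card =
      (Finset.univ.filter fun a => f a = 0).card := fun b =>
    AddMonoidHom.card_fiber_eq_of_mem_range f (hf b) (hf 0)
  have h2 : ∀ G : B → ℂ, ∑ a, G (f a) =
      ((Finset.univ.filter fun a => f a = 0).card : ℂ) * ∑ b, G b := by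
    intro G
    rw [← Finset.sum_fiberwise_of_maps_to (t := Finset.univ) (g := f) (fun _ _ => Finset.mem_univ _),
      Finset.mul_sum]
    refine Finset.sum_congr rfl fun b _ => ?_
    rw [Finset.sum_congr rfl (g := fun _ => G b), Finset.sum_const, h1, nsmul_eq_mul]
    intro a ha
    rw [(Finset.mem_filter.mp ha).2]
  have h3 := h2 (fun _ => 1)
  simp only [Finset.sum_const, Finset.card_univ, nsmul_eq_mul, mul_one] at h3
  rw [h2, Nat.card_eq_fintype_card, Nat.card_eq_fintype_card, h3]
  ring

lemma gauss_red (hχ : IsCubicSymbol χ) (hπ : Prime π) (hπ1 : (3 : Zω) ∣ (π - 1)) (j : ℕ) :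
    gauss χ (r * π ^ j) (π ^ (j + 1)) =
      (Nm (π ^ j) : ℂ) * ∑' q : Zω ⧸ Ideal.span {π}, FF χ π r (j + 1) (Quotient.out q) := by
  rw [gauss_eq hχ hπ]
  have hne : π ^ (j + 1) ≠ 0 := pow_ne_zero _ hπ.ne_zero
  have := finite_quot _ hne
  have := finite_quot _ hπ.ne_zero
  have hle : Ideal.span {π ^ (j + 1)} ≤ Ideal.span {π} := by
    rw [Ideal.span_singleton_le_span_singleton]
    exact dvd_pow_self _ (Nat.succ_ne_zero _)
  have key := sum_fiber (Ideal.Quotient.factor hle).toAddMonoidHom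
    (Ideal.Quotient.factor_surjective hle) (fun q => FF χ π r (j + 1) (Quotient.out q))
  have hG : ∀ q : Zω ⧸ Ideal.span {π ^ (j + 1)},
      FF χ π r (j + 1) (Quotient.out ((Ideal.Quotient.factor hle).toAddMonoidHom q)) =
      FF χ π r (j + 1) (Quotient.out q) := by
    intro q
    apply FF_congr hχ hπ hπ1
    have : (Ideal.Quotient.factor hle).toAddMonoidHom q =
        Ideal.Quotient.mk (Ideal.span {π}) (Quotient.out q) := by
      conv_lhs => rw [← Quotient.out_eq q]
      rfl
    rw [this]
    exact out_congr _ _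
  simp only [hG] at key
  have c1 : (Nat.card (Zω ⧸ Ideal.span {π}) : ℂ) = (Nm π : ℂ) := by
    rw [← card_quot _ hπ.ne_zero]; simp
  have c2 : (Nat.card (Zω ⧸ Ideal.span {π ^ (j + 1)}) : ℂ) = (Nm (π ^ j) : ℂ) * (Nm π : ℂ) := by
    rw [← Complex.ofReal_mul, ← Nm_mul, ← pow_succ, ← card_quot _ hne]; simp
  rw [c1, c2] at key
  have hN : (Nm π : ℂ) ≠ 0 := by exact_mod_cast Nm_ne _ hπ.ne_zero
  apply mul_left_cancel₀ hN
  rw [key]; ring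

/-- additive character modulo `π` -/
noncomputable def psi (hπ : Prime π) (r : Zω) : AddChar (Zω ⧸ Ideal.span {π}) ℂ where
  toFun q := eE ((r * (Quotient.out q : Zω) : ℂ) / π)
  map_zero_eq_one' := by
    have := eE_congr (r := r) hπ (out_congr π 0)
    rw [map_zero] at this
    rw [this]
    simp [eE_zero]
  map_add_eq_mul' a b := by
    have h : π ∣ Quotient.out (a + b) - (Quotient.out a + Quotient.out b) := by
      have := out_congr π (Quotient.out a + Quotient.out b)
      rw [map_add] at this
      have ea : Ideal.Quotient.mk (Ideal.span {π}) (Quotient.out a) = a := Quotient.out_eq a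
      have eb : Ideal.Quotient.mk (Ideal.span {π}) (Quotient.out b) = b := Quotient.out_eq b
      rwa [ea, eb] at this
    rw [eE_congr hπ h, ← eE_add]
    congr 1
    push_cast
    ring

lemma psi_mk (hπ : Prime π) (r a : Zω) :
    psi hπ r (Ideal.Quotient.mk _ a) = eE ((r * a : ℂ) / π) :=
  eE_congr hπ (out_congr π a)

lemma psi_ne (hπ : Prime π) (hπ1 : (3 : Zω) ∣ (π - 1)) (hco : IsCoprime π r) :
    psi hπ r ≠ 1 := by
  intro h
  have h1 := psi_mk hπ r 1
  have h2 := psi_mk hπ r ωZ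
  rw [h] at h1 h2
  have h0 : (π : ℂ) ≠ 0 := by simpa using hπ.ne_zero
  have k2 : ((2 : Zω) : ℂ) = 2 := rfl
  have k3 : ((3 : Zω) : ℂ) = 3 := rfl
  obtain ⟨s, hs⟩ := eE_nontriv (z := (r : ℂ) / π) (by simpa using h1.symm)
    (by
      rw [div_mul_eq_mul_div]
      simpa [ωZ] using h2.symm)
  have h3 : r * (1 + 2 * ωZ) = π * s := by
    apply Subtype.ext
    push_cast
    rw [← hs]
    simp only [ωZ, k2]
    field_simp
  have h4 : π ∣ 1 + 2 * ωZ := hco.dvd_of_dvd_mul_left ⟨s, h3⟩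
  apply not_dvd_three hπ hπ1
  have h5 : (3 : Zω) = (1 + 2 * ωZ) * (-(1 + 2 * ωZ)) := by
    apply Subtype.ext
    push_cast
    simp only [ωZ, k2, k3]
    linear_combination 4 * om_sq
  rw [h5]
  exact h4.mul_right _

end main


open Complex in
/-- for a prime `π ≡ 1 (mod 3)`, `r ≡ 1 (mod 3)` coprime to `π`,
`j ≥ 0` and `k = j + 1`: `g(rπʲ, πᵏ)` equals `N(πʲ)` times `-1` if `3 ∣ k`,
`g(r,π)` if `k ≡ 1 (mod 3)`, and `conj(g(r,π))` if `k ≡ 2 (mod 3)`. -/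
theorem gauss_prime_power_boundary (χ : Zω → Zω → Zω) (hχ : IsCubicSymbol χ)
    (π r : Zω) (hπ : Prime π) (hπ1 : (3 : Zω) ∣ (π - 1)) (hr : (3 : Zω) ∣ (r - 1))
    (hco : IsCoprime π r) (j : ℕ) :
    (3 ∣ (j + 1) → gauss χ (r * π ^ j) (π ^ (j + 1)) = (Nm (π ^ j) : ℂ) * (-1)) ∧
    ((j + 1) % 3 = 1 → gauss χ (r * π ^ j) (π ^ (j + 1)) = (Nm (π ^ j) : ℂ) * gauss χ r π) ∧
    ((j + 1) % 3 = 2 →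
      gauss χ (r * π ^ j) (π ^ (j + 1)) = (Nm (π ^ j) : ℂ) * (starRingEnd ℂ) (gauss χ r π)) := by
  have h0 : (π : ℂ) ≠ 0 := by simpa using hπ.ne_zero
  have := finite_quot _ hπ.ne_zero
  letI := Fintype.ofFinite (Zω ⧸ Ideal.span {π})
  have hg : gauss χ r π = ∑ q : Zω ⧸ Ideal.span {π}, FF χ π r 1 (Quotient.out q) := by
    unfold gauss FF
    rw [tsum_fintype]
    refine Finset.sum_congr rfl fun q _ => ?_
    push_cast
    rw [pow_one]
  have hz : ∀ a, π ∣ a → (χ a π : ℂ) = 0 := fun a ha => by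
    rw [(hχ.2.2.2 a π hπ (cop3 hπ1)).1 ha]; rfl
  have hc : ∀ a, ¬ π ∣ a → (χ a π : ℂ) ^ 3 = 1 := fun a ha => by
    have := congrArg (fun z : Zω => (z : ℂ)) (chi_cube hχ hπ hπ1 ha)
    simpa using this
  rw [gauss_red hχ hπ hπ1, tsum_fintype]
  refine ⟨fun hk => ?_, fun hk => ?_, fun hk => ?_⟩
  · congr 1
    classical
    obtain ⟨m, hm⟩ := hk
    have hs := AddChar.sum_eq_zero_of_ne_one (psi_ne (r := r) hπ hπ1 hco)
    have : ∀ q : Zω ⧸ Ideal.span {π}, FF χ π r (j + 1) (Quotient.out q) =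
        psi hπ r q - if q = 0 then 1 else 0 := by
      intro q
      have hq : q = 0 ↔ π ∣ Quotient.out q := by
        rw [← Ideal.mem_span_singleton, ← Ideal.Quotient.eq_zero_iff_mem]
        have : Ideal.Quotient.mk (Ideal.span {π}) (Quotient.out q) = q := Quotient.out_eq q
        rw [this]
      split_ifs with h
      · have hd := hq.mp h
        rw [h, AddChar.map_zero_eq_one, ← h]
        unfold FF
        rw [hz _ hd]; simp
      · have hd := fun h' => h (hq.mpr h')
        unfold FF
        rw [hm, pow_mul, hc _ hd, one_pow, one_mul, sub_zero]
        rfl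
    rw [Finset.sum_congr rfl (fun q _ => this q), Finset.sum_sub_distrib, hs]
    simp
  · rw [hg]
    congr 1
    refine Finset.sum_congr rfl fun q _ => ?_
    unfold FF
    by_cases hd : π ∣ Quotient.out q
    · rw [hz _ hd]; simp
    · congr 1
      rw [← Nat.div_add_mod (j + 1) 3, hk, pow_add, pow_mul, hc _ hd, one_pow, one_mul]
  · rw [hg, map_sum]
    congr 1
    rw [← Equiv.sum_comp (Equiv.neg _)]
    refine Finset.sum_congr rfl fun q _ => ?_
    have hn : π ∣ Quotient.out (-q) - (-Quotient.out q) := by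
      have := out_congr π (-Quotient.out q)
      have eq : Ideal.Quotient.mk (Ideal.span {π}) (Quotient.out q) = q := Quotient.out_eq q
      rwa [map_neg, eq] at this
    rw [Equiv.neg_apply, FF_congr hχ hπ hπ1 _ hn]
    generalize Quotient.out q = a
    have hneg : (χ (-1) π) = 1 := by
      have h1 : ¬ π ∣ -1 := fun h => hπ.not_isUnit (isUnit_of_dvd_unit h isUnit_one.neg)
      have := chi_cube hχ hπ hπ1 h1
      rw [pow_succ, pow_two, ← hχ.2.1, ← hχ.2.1] at this
      simpa using this
    have hna : χ (-a) π = χ a π := by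
      rw [← neg_one_mul, hχ.2.1, hneg, one_mul]
    unfold FF
    rw [hna, map_mul, eE_conj, map_pow, pow_one]
    by_cases hd : π ∣ a
    · rw [hz _ hd]; simp
    · rw [conj_of_cube (hc _ hd)]
      congr 1
      · rw [← Nat.div_add_mod (j + 1) 3, hk, pow_add, pow_mul, hc _ hd, one_pow, one_mul]
      · congr 1
        push_cast
        ring
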